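/- Let N be a positive integer, s ∈ (0,1), ω ⊆ ℝ^N a thick measurable set. Then for every β > 0 there exists C > 0 such that for every λ ∈ ℂ with Re λ > −β and every Schwartz function φ : ℝ^N → ℂ, (Re λ + β)²·∫_{ℝ^N} |φ(x)|² dx ≤ C·( ∫_{ℝ^N} |(λ + (2π|ξ|)^s)·φ̂(ξ)|² dξ + ∫_ω |φ(x)|² dx ), where φ̂(ξ) = ∫_{ℝ^N} φ(x)·e^{−2πi⟨x,ξ⟩} dx is the Fourier transform of φ. -/

import Mathlib

open MeasureTheory Real

/-!
Let `σ ξ = (2π|ξ|) ^ s`. Since `σ` is real, `|λ + σ| ≥ Re λ + σ`. If `Re λ ≥ 1`, Plancherel alone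
gives the bound, because `σ ≥ 0`. If `-β < Re λ < 1`, then `|λ + σ| ≥ 1` outside a ball that
depends only on `β` and `s`, because `σ → ∞`: the frequencies outside a larger ball are controlled
by the multiplier, and the remaining band-limited part by its restriction to `ω`
(Logvinenko–Sereda).

The Logvinenko–Sereda inequality follows from compactness. A function `f` whose Fourier transform
is supported in a fixed compact set has the form `f x = ψ (k x)`, where `ψ` is a linear functional
and `k`, the family of characters, is analytic in `x` and does not depend on `f`. The functions with
`‖ψ‖ ≤ 1` form a compact family by Arzelà–Ascoli, and its nonzero members, being analytic, vanish
only on null sets; hence `∫_Q |f|² ≤ C ∫_E |f|² + δ ‖ψ‖²`, uniformly over the subsets `E` of measure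
at least `ε` of a compact window `Q`. Multiplying `f` by a function with compactly supported Fourier
transform localises it, and turns `‖ψ‖²` into a weighted norm of `f`. Averaging over all translates
then gives a multiple of `δ ∫ |f|²`, which is absorbed into the left-hand side.
-/

section

open Filter Function Metric Set Topology
open scoped ComplexConjugate FourierTransform Pointwise SchwartzMap

section ZeroSet

theorem ae_ne_zero_of_analyticOnNhd {V F : Type*} [NormedAddCommGroup V] [NormedSpace ℝ V]
    [FiniteDimensional ℝ V] [MeasurableSpace V] [BorelSpace V] [NormedAddCommGroup F]
    [NormedSpace ℝ F] {μ : Measure V} [μ.IsAddHaarMeasure] {f : V → F}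
    (hf : AnalyticOnNhd ℝ f univ) {x₀ : V} (hx₀ : f x₀ ≠ 0) : ∀ᵐ x ∂μ, f x ≠ 0 := by
  set Z : Set V := {v | f (x₀ + v) = 0} with hZ
  have hf_cont : Continuous f := continuousOn_univ.1 hf.continuousOn
  have hZ_meas : MeasurableSet Z := (isClosed_eq (by fun_prop) continuous_const).measurableSet
  have on_lines (v : V) : ∀ᵐ t : ℝ, t • v ∉ Z := by
    have hline : AnalyticOnNhd ℝ (fun t : ℝ ↦ f (x₀ + t • v)) univ := fun t _ ↦
      (hf (x₀ + t • v) trivial).comp (f := fun t : ℝ ↦ x₀ + t • v) (by fun_prop)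
    rcases hline.eqOn_zero_or_eventually_ne_zero_of_preconnected isPreconnected_univ with h | h
    · exact absurd (by simpa using h (mem_univ 0)) hx₀
    · have : ∀ᵐ t ∂volume.restrict univ, f (x₀ + t • v) ≠ 0 :=
        ae_restrict_le_codiscreteWithin MeasurableSet.univ h
      simpa [hZ] using this
  have on_dilates : ∀ᵐ t : ℝ, ∀ᵐ v ∂μ, t • v ∉ Z :=
    (Measure.ae_ae_comm (p := fun v (t : ℝ) ↦ t • v ∉ Z)
      (hZ_meas.compl.preimage (by fun_prop))).1 (ae_of_all μ on_lines)
  obtain ⟨t, ht, ht₀⟩ := (on_dilates.and (Measure.ae_ne volume 0)).exists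
  have hZ_null : μ Z = 0 := by
    have : μ ((t • ·) ⁻¹' Z) = 0 := by simpa [ae_iff, preimage] using ht
    simpa [Measure.addHaar_preimage_smul μ ht₀, ht₀] using this
  simpa [ae_iff] using (measure_preimage_add μ x₀ {x | f x = 0}).symm.trans hZ_null

end ZeroSet

section Compactness

theorem exists_pos_measureReal_norm_lt_lt {X F : Type*} [MeasurableSpace X]
    [NormedAddCommGroup F] {μ : Measure X} [IsFiniteMeasure μ] {f : X → F}
    (hf : AEStronglyMeasurable f μ) (hf₀ : ∀ᵐ x ∂μ, f x ≠ 0) {ε : ℝ} (hε : 0 < ε) :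
    ∃ τ > 0, μ.real {x | ‖f x‖ < τ} < ε := by
  have hlim : Tendsto (fun τ : ℝ ↦ μ {x | ‖f x‖ < τ}) (𝓝[>] 0) (𝓝 0) := by
    have hnull : μ (⋂ τ > (0 : ℝ), {x | ‖f x‖ < τ}) = 0 := by
      refine measure_mono_null (fun x hx ↦ ?_) (ae_iff.1 hf₀)
      simp only [gt_iff_lt, mem_iInter] at hx
      simpa using le_of_forall_gt hx
    rw [← hnull]
    exact tendsto_measure_biInter_gt
      (fun τ _ ↦ nullMeasurableSet_lt hf.norm.aemeasurable aemeasurable_const)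
      (fun _ _ _ hij _ hx ↦ lt_of_lt_of_le hx hij) ⟨1, one_pos, measure_ne_top _ _⟩
  have hlim_real : Tendsto (fun τ : ℝ ↦ μ.real {x | ‖f x‖ < τ}) (𝓝[>] 0) (𝓝 0) :=
    (ENNReal.tendsto_toReal ENNReal.zero_ne_top).comp hlim
  obtain ⟨τ, hτ, hτ₀⟩ := ((hlim_real.eventually_lt_const hε).and self_mem_nhdsWithin).exists
  exact ⟨τ, hτ₀, hτ⟩

variable {X F : Type*} [TopologicalSpace X] [MeasurableSpace X] [NormedAddCommGroup F]
  {μ : Measure X} [IsFiniteMeasureOnCompacts μ] {Q : Set X} {f₀ : C(X, F)} {ε : ℝ}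

theorem eventually_setIntegral_norm_sq_le (hQ : IsCompact Q) {B : ℝ} (hB : ∀ x ∈ Q, ‖f₀ x‖ < B) :
    ∀ᶠ f in 𝓝 f₀, ∫ x in Q, ‖f x‖ ^ 2 ∂μ ≤ B ^ 2 * μ.real Q := by
  have hmaps : MapsTo f₀ Q (ball 0 B) := fun x hx ↦ by simpa using hB x hx
  filter_upwards [ContinuousMap.eventually_mapsTo hQ isOpen_ball hmaps] with f hf
  refine (le_norm_self _).trans
    (norm_setIntegral_le_of_norm_le_const hQ.measure_lt_top fun x hx ↦ ?_)
  have : ‖f x‖ < B := mem_ball_zero_iff.1 (hf hx)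
  rw [norm_pow, norm_norm]
  gcongr

variable [T2Space X] [OpensMeasurableSpace X]

theorem exists_pos_eventually_le_setIntegral_norm_sq (hQ : IsCompact Q)
    (hf₀ : ∀ᵐ x ∂μ, f₀ x ≠ 0) (hε : 0 < ε) :
    ∃ c > 0, ∀ᶠ f in 𝓝 f₀, ∀ E ⊆ Q, MeasurableSet E → ε ≤ μ.real E →
      c ≤ ∫ x in E, ‖f x‖ ^ 2 ∂μ := by
  have : IsFiniteMeasure (μ.restrict Q) := isFiniteMeasure_restrict.2 hQ.measure_ne_top
  obtain ⟨τ, hτ, hτ_small⟩ := exists_pos_measureReal_norm_lt_lt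
    (f₀.continuous.continuousOn.aestronglyMeasurable_of_isCompact hQ hQ.measurableSet)
    (ae_restrict_of_ae (s := Q) hf₀) (half_pos hε)
  set K : Set X := Q ∩ {x | τ ≤ ‖f₀ x‖}
  have hK : IsCompact K := hQ.inter_right (isClosed_le (by fun_prop) (by fun_prop))
  have hQK : μ.real (Q \ K) < ε / 2 := by
    rw [measureReal_restrict_apply' hQ.measurableSet] at hτ_small
    convert hτ_small using 2
    ext x
    simp [K, and_comm]
  have hmaps : MapsTo f₀ K {z | τ / 2 < ‖z‖} := fun x hx ↦ (half_lt_self hτ).trans_le hx.2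
  refine ⟨(τ / 2) ^ 2 * (ε / 2), by positivity, ?_⟩
  filter_upwards [ContinuousMap.eventually_mapsTo hK (isOpen_lt continuous_const continuous_norm)
    hmaps] with f hf E hE hE_meas hεE
  have hf_int : IntegrableOn (fun x ↦ ‖f x‖ ^ 2) E μ :=
    (f.continuous.norm.pow 2).continuousOn.integrableOn_compact hQ |>.mono_set hE
  have hfin {T : Set X} (hT : T ⊆ Q) : μ T ≠ ⊤ := measure_ne_top_of_subset hT hQ.measure_ne_top
  have hEK : ε / 2 ≤ μ.real (E ∩ K) := by
    have hsplit := measureReal_inter_add_sdiff (s := E) hK.measurableSet (hfin hE)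
    have hdiff : μ.real (E \ K) ≤ μ.real (Q \ K) :=
      measureReal_mono (sdiff_subset_sdiff_left hE) (hfin sdiff_subset)
    linarith
  calc (τ / 2) ^ 2 * (ε / 2) ≤ (τ / 2) ^ 2 * μ.real (E ∩ K) := by gcongr
    _ ≤ ∫ x in E ∩ K, ‖f x‖ ^ 2 ∂μ := by
      refine setIntegral_ge_of_const_le_real (hE_meas.inter hK.measurableSet)
        (hfin (inter_subset_left.trans hE)) (fun x hx ↦ ?_) (hf_int.mono_set inter_subset_left)
      have : τ / 2 < ‖f x‖ := hf hx.2
      gcongr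
    _ ≤ ∫ x in E, ‖f x‖ ^ 2 ∂μ :=
      setIntegral_mono_set hf_int (ae_of_all _ fun _ ↦ by positivity)
        inter_subset_left.eventuallyLE

theorem exists_setIntegral_norm_sq_le_add_of_isCompact (hQ : IsCompact Q) {S : Set C(X, F)}
    (hS : IsCompact S) (hS₀ : ∀ f ∈ S, f ≠ 0 → ∀ᵐ x ∂μ, f x ≠ 0) (hε : 0 < ε) {δ : ℝ}
    (hδ : 0 < δ) :
    ∃ C > 0, ∀ f ∈ S, ∀ E ⊆ Q, MeasurableSet E → ε ≤ μ.real E →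
      ∫ x in Q, ‖f x‖ ^ 2 ∂μ ≤ C * (∫ x in E, ‖f x‖ ^ 2 ∂μ) + δ := by
  have hnonneg (f : C(X, F)) (E : Set X) : 0 ≤ ∫ x in E, ‖f x‖ ^ 2 ∂μ := by positivity
  refine hS.induction_on ⟨1, one_pos, by simp⟩ ?_ ?_ fun f₀ hf₀ ↦ ?_
  · rintro S T hST ⟨C, hC, hT⟩
    exact ⟨C, hC, fun f hf ↦ hT f (hST hf)⟩
  · rintro S T ⟨C, hC, hS⟩ ⟨C', hC', hT⟩
    refine ⟨C + C', by positivity, fun f hf E hE hE_meas hεE ↦ ?_⟩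
    rcases hf with hf | hf
    · nlinarith [hS f hf E hE hE_meas hεE, hnonneg f E]
    · nlinarith [hT f hf E hE hE_meas hεE, hnonneg f E]
  rcases eq_or_ne f₀ 0 with rfl | hne
  · obtain ⟨B, hB, hBδ⟩ : ∃ B : ℝ, 0 < B ∧ B ^ 2 * μ.real Q ≤ δ := by
      refine ⟨√(δ / (μ.real Q + 1)), by positivity, ?_⟩
      rw [sq_sqrt (by positivity), div_mul_eq_mul_div, div_le_iff₀ (by positivity)]
      gcongr
      linarith
    have hupper := eventually_setIntegral_norm_sq_le (μ := μ) (f₀ := (0 : C(X, F))) hQ (B := B)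
      fun _ _ ↦ by simpa using hB
    refine ⟨_, nhdsWithin_le_nhds hupper, 1, one_pos, fun f hf E _ _ _ ↦ ?_⟩
    rw [mem_ofPred_eq] at hf
    linarith [hnonneg f E]
  · obtain ⟨B, hB⟩ := (hQ.image f₀.continuous).isBounded.exists_norm_le
    obtain ⟨c, hc, hlower⟩ :=
      exists_pos_eventually_le_setIntegral_norm_sq hQ (hS₀ f₀ hf₀ hne) hε
    have hupper := eventually_setIntegral_norm_sq_le (μ := μ) (f₀ := f₀) hQ (B := B + 1)
      fun x hx ↦ (hB _ (mem_image_of_mem _ hx)).trans_lt (lt_add_one B)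
    set M : ℝ := (B + 1) ^ 2 * μ.real Q
    refine ⟨_, nhdsWithin_le_nhds (hlower.and hupper), (M + 1) / c, by positivity,
      fun f ⟨hf, hfM⟩ E hE hE_meas hεE ↦ ?_⟩
    calc ∫ x in Q, ‖f x‖ ^ 2 ∂μ ≤ M := hfM
      _ ≤ (M + 1) / c * c + δ := by rw [div_mul_cancel₀ _ hc.ne']; linarith
      _ ≤ (M + 1) / c * (∫ x in E, ‖f x‖ ^ 2 ∂μ) + δ := by
        gcongr
        exact hf E hE hE_meas hεE

end Compactness

section DualFamily

theorem isCompact_image_comp_closedBall {𝕜 X G : Type*} [RCLike 𝕜] [TopologicalSpace X]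
    [NormedAddCommGroup G] [NormedSpace 𝕜 G] (k : C(X, G)) :
    IsCompact ((fun ψ : StrongDual 𝕜 G ↦ (ψ : C(G, 𝕜)).comp k) '' closedBall 0 1) := by
  apply ArzelaAscoli.isCompact_of_equicontinuous
  · have hweak : IsCompact (WeakDual.toStrongDual ⁻¹' closedBall (0 : StrongDual 𝕜 G) 1) :=
      WeakDual.isCompact_closedBall 0 1
    have heval : Continuous fun (ψ : WeakDual 𝕜 G) (x : X) ↦ ψ (k x) :=
      continuous_pi fun x ↦ WeakDual.eval_continuous (k x)
    convert hweak.image heval using 1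
    rw [image_image]
    rfl
  · intro x₀
    refine equicontinuousAt_of_continuity_modulus (fun x ↦ dist (k x₀) (k x)) ?_ _ ?_
    · simpa using (continuous_const.dist k.continuous).tendsto (f := fun x ↦ dist (k x₀) (k x)) x₀
    · refine Eventually.of_forall fun x ↦ ?_
      rintro ⟨_, ψ, hψ, rfl⟩
      simpa [dist_eq_norm] using ψ.le_of_opNorm_le (mem_closedBall_zero_iff.1 hψ) (k x₀ - k x)

theorem exists_setIntegral_norm_sq_dual_le {𝕜 V G : Type*} [RCLike 𝕜] [NormedAddCommGroup V]
    [NormedSpace ℝ V] [FiniteDimensional ℝ V] [MeasurableSpace V] [BorelSpace V]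
    [NormedAddCommGroup G] [NormedSpace 𝕜 G] [NormedSpace ℝ G] [IsScalarTower ℝ 𝕜 G]
    {μ : Measure V} [μ.IsAddHaarMeasure] {k : V → G}
    (hk : AnalyticOnNhd ℝ k univ) {Q : Set V} (hQ : IsCompact Q) {ε δ : ℝ} (hε : 0 < ε)
    (hδ : 0 < δ) :
    ∃ C > 0, ∀ ψ : StrongDual 𝕜 G, ∀ E ⊆ Q, MeasurableSet E → ε ≤ μ.real E →
      ∫ x in Q, ‖ψ (k x)‖ ^ 2 ∂μ ≤ C * (∫ x in E, ‖ψ (k x)‖ ^ 2 ∂μ) + δ * ‖ψ‖ ^ 2 := by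
  have hk_cont : Continuous k := continuousOn_univ.1 hk.continuousOn
  obtain ⟨C, hC, hball⟩ := exists_setIntegral_norm_sq_le_add_of_isCompact (μ := μ) hQ
    (isCompact_image_comp_closedBall (𝕜 := 𝕜) ⟨k, hk_cont⟩) (by
      rintro _ ⟨ψ, -, rfl⟩ hne
      obtain ⟨x₀, hx₀⟩ := DFunLike.ne_iff.1 hne
      exact ae_ne_zero_of_analyticOnNhd (f := fun x ↦ ψ (k x))
        (fun x _ ↦ ((ψ.restrictScalars ℝ).analyticAt _).comp (hk x trivial)) hx₀) hε hδ
  refine ⟨C, hC, fun ψ E hE hE_meas hεE ↦ ?_⟩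
  rcases eq_or_ne ψ 0 with rfl | hψ
  · simp
  have hψ_pos : 0 < ‖ψ‖ := norm_pos_iff.2 hψ
  have hscaled := hball _ ⟨((‖ψ‖⁻¹ : ℝ) : 𝕜) • ψ, by simp [norm_smul, hψ_pos.ne'], rfl⟩
    E hE hE_meas hεE
  simp only [ContinuousMap.comp_apply, ContinuousMap.coe_mk, smul_apply, norm_smul,
    RCLike.norm_ofReal, abs_inv, abs_norm, mul_pow, integral_const_mul] at hscaled
  have := mul_le_mul_of_nonneg_left hscaled (sq_nonneg ‖ψ‖)
  field_simp at this
  linarith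

end DualFamily

section FourierKernel

variable {V : Type*} [NormedAddCommGroup V] [InnerProductSpace ℝ V]

/-- The family of characters `ξ ↦ exp (-2πi ⟪ξ, x⟫)`, restricted to a set `K` of frequencies and
regarded as a function of `x` with values in the continuous functions on `K`. -/
noncomputable def fourierKernel (K : Set V) (x : V) : C(K, ℂ) where
  toFun ξ := Complex.exp (((-2 * π * inner ℝ (ξ : V) x : ℝ) : ℂ) * Complex.I)
  continuous_toFun := by fun_prop

theorem analyticOnNhd_fourierKernel [FiniteDimensional ℝ V] (K : Set V) [CompactSpace K] :
    AnalyticOnNhd ℝ (fourierKernel K) univ := by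
  let phase : V →ₗ[ℝ] C(K, ℂ) :=
    { toFun x := ⟨fun ξ ↦ ((-2 * π * inner ℝ (ξ : V) x : ℝ) : ℂ) * Complex.I, by fun_prop⟩
      map_add' x y := by
        ext ξ
        simp only [ContinuousMap.coe_mk, ContinuousMap.add_apply, inner_add_right]
        push_cast
        ring
      map_smul' c x := by
        ext ξ
        simp only [ContinuousMap.coe_mk, ContinuousMap.smul_apply, inner_smul_right,
          RingHom.id_apply, Complex.real_smul]
        push_cast
        ring }
  have hexp : fourierKernel K = NormedSpace.exp ∘ phase.toContinuousLinearMap := by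
    ext x ξ
    rw [fourierKernel, ContinuousMap.coe_mk, Complex.exp_eq_exp_ℂ]
    exact (NormedSpace.map_exp (ContinuousMap.evalAlgHom ℂ ℂ ξ) (continuous_eval_const ξ)
      (phase x)).symm
  rw [hexp]
  exact fun x _ ↦ (NormedSpace.exp_analytic (𝕂 := ℝ) _).comp
    (phase.toContinuousLinearMap.analyticAt x)

variable [FiniteDimensional ℝ V] [MeasurableSpace V] [BorelSpace V]

theorem exists_setIntegral_norm_sq_fourier_le {K : Set V} (hK : IsCompact K) {Q : Set V}
    (hQ : IsCompact Q) {ε δ : ℝ} (hε : 0 < ε) (hδ : 0 < δ) :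
    ∃ C > 0, ∀ c : V → ℂ, Continuous c → support c ⊆ K → ∀ E ⊆ Q, MeasurableSet E →
      ε ≤ volume.real E →
      ∫ x in Q, ‖𝓕 c x‖ ^ 2 ≤ C * (∫ x in E, ‖𝓕 c x‖ ^ 2) + δ * ∫ ξ, ‖c ξ‖ ^ 2 := by
  have : CompactSpace K := isCompact_iff_compactSpace.1 hK
  let ν : Measure K := volume.comap Subtype.val
  have : IsFiniteMeasure ν := ⟨by
    rw [comap_subtype_coe_apply hK.measurableSet]
    simpa using hK.measure_lt_top⟩
  let L := ContinuousMap.toLp (E := ℂ) 2 ν ℂ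
  obtain ⟨C, hC, hdual⟩ := exists_setIntegral_norm_sq_dual_le (𝕜 := ℂ) (μ := volume)
    (fun x _ ↦ ((L.restrictScalars ℝ).analyticAt _).comp (analyticOnNhd_fourierKernel K x trivial))
    hQ hε hδ
  refine ⟨C, hC, fun c hc hcK E hE hE_meas hεE ↦ ?_⟩
  have integral_eq (g : V → ℂ) : ∫ ξ : K, g ξ * c ξ ∂ν = ∫ ξ, g ξ * c ξ := by
    rw [integral_subtype_comap hK.measurableSet (fun ξ ↦ g ξ * c ξ)]
    refine setIntegral_eq_integral_of_forall_compl_eq_zero fun ξ hξ ↦ ?_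
    rw [notMem_support.1 (mt (@hcK ξ) hξ), mul_zero]
  let cK : C(K, ℂ) := ⟨fun ξ ↦ conj (c ξ), by fun_prop⟩
  have hψ (x : V) : innerSL ℂ (L cK) (L (fourierKernel K x)) = 𝓕 c x := by
    rw [innerSL_apply_apply, ContinuousMap.inner_toLp, Real.fourier_eq']
    simpa [cK, fourierKernel] using
      integral_eq fun ξ ↦ Complex.exp (((-2 * π * inner ℝ ξ x : ℝ) : ℂ) * Complex.I)
  have hnorm : ‖innerSL ℂ (L cK)‖ ^ 2 = ∫ ξ, ‖c ξ‖ ^ 2 := by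
    rw [innerSL_apply_norm, ← RCLike.ofReal_inj (K := ℂ), ← integral_ofReal, RCLike.ofReal_pow,
      ← inner_self_eq_norm_sq_to_K (𝕜 := ℂ), ContinuousMap.inner_toLp]
    simpa [cK, Complex.conj_mul'] using integral_eq fun ξ ↦ conj (c ξ)
  simpa only [Function.comp_apply, ContinuousLinearMap.coe_restrictScalars', hψ, hnorm]
    using hdual (innerSL ℂ (L cK)) E hE hE_meas hεE

end FourierKernel

section Bump

variable {V : Type*} [NormedAddCommGroup V] [NormedSpace ℝ V] [HasContDiffBump V]
  [FiniteDimensional ℝ V]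

/-- A smooth bump function centred at the origin, as a complex-valued Schwartz function. -/
noncomputable def bumpSchwartz (g : ContDiffBump (0 : V)) : 𝓢(V, ℂ) :=
  (g.hasCompactSupport.comp_left Complex.ofReal_zero).toSchwartzMap
    (Complex.ofRealCLM.contDiff.comp g.contDiff)

@[simp]
theorem bumpSchwartz_apply (g : ContDiffBump (0 : V)) (ξ : V) : bumpSchwartz g ξ = g ξ :=
  rfl

theorem hasCompactSupport_bumpSchwartz (g : ContDiffBump (0 : V)) :
    HasCompactSupport (bumpSchwartz g) :=
  g.hasCompactSupport.comp_left Complex.ofReal_zero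

end Bump

section Window

variable {V : Type*} [NormedAddCommGroup V] [InnerProductSpace ℝ V] [FiniteDimensional ℝ V]
  [MeasurableSpace V] [BorelSpace V]

theorem norm_fourier_sub_integral_le {F : Type*} [NormedAddCommGroup F] [NormedSpace ℂ F]
    {f : V → F} (hf : Integrable f) {r : ℝ} (hr : support f ⊆ closedBall 0 r) (x : V) :
    ‖𝓕 f x - ∫ ξ, f ξ‖ ≤ 2 * π * r * ‖x‖ * ∫ ξ, ‖f ξ‖ := by
  rw [Real.fourier_eq, ← integral_sub ((Real.fourierIntegral_convergent_iff x).2 hf) hf,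
    ← integral_const_mul]
  refine norm_integral_le_of_norm_le (hf.norm.const_mul _) (ae_of_all _ fun ξ ↦ ?_)
  by_cases hξ : f ξ = 0
  · simp [hξ]
  have hξr : ‖ξ‖ ≤ r := mem_closedBall_zero_iff.1 (hr hξ)
  have hchar : ‖(𝐞 (-inner ℝ ξ x) : ℂ) - 1‖ ≤ 2 * π * r * ‖x‖ := by
    calc ‖(𝐞 (-inner ℝ ξ x) : ℂ) - 1‖ ≤ ‖2 * π * -inner ℝ ξ x‖ := by
          rw [Real.fourierChar_apply, mul_comm _ Complex.I]
          exact Real.norm_exp_I_mul_ofReal_sub_one_le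
      _ = 2 * π * ‖inner ℝ ξ x‖ := by simp [abs_of_pos pi_pos]
      _ ≤ 2 * π * (‖ξ‖ * ‖x‖) := by gcongr; exact norm_inner_le_norm ξ x
      _ ≤ 2 * π * r * ‖x‖ := by rw [mul_assoc _ r]; gcongr
  calc ‖𝐞 (-inner ℝ ξ x) • f ξ - f ξ‖ = ‖(𝐞 (-inner ℝ ξ x) : ℂ) - 1‖ * ‖f ξ‖ := by
        rw [Circle.smul_def, ← norm_smul, sub_smul, one_smul]
    _ ≤ 2 * π * r * ‖x‖ * ‖f ξ‖ := by gcongr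

theorem exists_hasCompactSupport_le_norm_fourier {Q : Set V} (hQ : Bornology.IsBounded Q) :
    ∃ b : 𝓢(V, ℂ), HasCompactSupport b ∧ ∃ m > 0, ∀ x ∈ Q, m ≤ ‖𝓕 b x‖ := by
  obtain ⟨B, hB, hQB⟩ := hQ.exists_pos_norm_le
  set r : ℝ := 1 / (4 * π * B)
  have hr : 0 < r := by positivity
  let bump : ContDiffBump (0 : V) := ⟨r / 2, r, by positivity, by linarith⟩
  have hint : 0 < ∫ ξ, bump ξ := bump.integral_pos
  have hsupp : support (bumpSchwartz bump) ⊆ closedBall 0 r := fun ξ hξ ↦ by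
    have : ξ ∈ support bump := fun h ↦ hξ (by simp [h])
    rw [bump.support_eq] at this
    exact ball_subset_closedBall this
  refine ⟨bumpSchwartz bump, hasCompactSupport_bumpSchwartz bump, (∫ ξ, bump ξ) / 2,
    half_pos hint, fun x hx ↦ ?_⟩
  have hclose := norm_fourier_sub_integral_le (bumpSchwartz bump).integrable hsupp x
  have hxB : 2 * π * r * ‖x‖ ≤ 1 / 2 := by
    calc 2 * π * r * ‖x‖ ≤ 2 * π * r * B := by gcongr; exact hQB x hx
      _ = 1 / 2 := by simp only [r]; field_simp; norm_num
  have hnorm_int : ∫ ξ, ‖bumpSchwartz bump ξ‖ = ∫ ξ, bump ξ :=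
    integral_congr_ae (ae_of_all _ fun ξ ↦ by simp [abs_of_nonneg bump.nonneg])
  have hint_norm : ‖∫ ξ, bumpSchwartz bump ξ‖ = ∫ ξ, bump ξ := by
    simp [integral_complex_ofReal, abs_of_pos hint]
  have htriangle := norm_sub_norm_le (∫ ξ, bumpSchwartz bump ξ) (𝓕 ⇑(bumpSchwartz bump) x)
  rw [norm_sub_rev, hint_norm] at htriangle
  rw [hnorm_int] at hclose
  rw [SchwartzMap.fourier_coe]
  nlinarith

end Window

section LocalEstimate

variable {V : Type*} [NormedAddCommGroup V] [InnerProductSpace ℝ V] [FiniteDimensional ℝ V]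
  [MeasurableSpace V] [BorelSpace V]

theorem integrable_norm_sq_schwartz (f : 𝓢(V, ℂ)) : Integrable fun x ↦ ‖f x‖ ^ 2 :=
  (f.memLp 2).integrable_norm_pow two_ne_zero

theorem exists_fourier_eq_mul (f b : 𝓢(V, ℂ)) :
    ∃ c : 𝓢(V, ℂ), (∀ x, 𝓕 c x = f x * 𝓕 b x) ∧
      support c ⊆ -support (𝓕 f : 𝓢(V, ℂ)) + support b := by
  refine ⟨SchwartzMap.convolution (ContinuousLinearMap.mul ℂ ℂ) (𝓕⁻ f) b, fun x ↦ ?_, ?_⟩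
  · simp [SchwartzMap.fourier_convolution]
  · have hconv : ⇑(SchwartzMap.convolution (ContinuousLinearMap.mul ℂ ℂ) (𝓕⁻ f) b) =
        convolution (𝓕⁻ f : 𝓢(V, ℂ)) b (ContinuousLinearMap.mul ℂ ℂ) volume :=
      funext (SchwartzMap.convolution_apply _ _ _)
    have hinv : support (𝓕⁻ f : 𝓢(V, ℂ)) = -support (𝓕 f : 𝓢(V, ℂ)) := by
      ext ξ
      simp [SchwartzMap.fourierInv_coe, SchwartzMap.fourier_coe, Real.fourierInv_eq_fourier_neg]
    rw [hconv, ← hinv]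
    exact support_convolution_subset _

theorem exists_setIntegral_norm_sq_le_of_support_fourier_subset {K Q : Set V} (hK : IsCompact K)
    (hQ : IsCompact Q) {ε : ℝ} (hε : 0 < ε) :
    ∃ η : 𝓢(V, ℂ), ∀ δ > 0, ∃ C > 0, ∀ f : 𝓢(V, ℂ), support (𝓕 f : 𝓢(V, ℂ)) ⊆ K →
      ∀ E ⊆ Q, MeasurableSet E → ε ≤ volume.real E →
        ∫ x in Q, ‖f x‖ ^ 2 ≤
          C * (∫ x in E, ‖f x‖ ^ 2) + δ * ∫ x, ‖η x‖ ^ 2 * ‖f x‖ ^ 2 := by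
  obtain ⟨b, hb, m, hm, hbm⟩ := exists_hasCompactSupport_le_norm_fourier hQ.isBounded
  obtain ⟨M, hM, hbM⟩ := (𝓕 b).decay 0 0
  simp only [pow_zero, one_mul, norm_iteratedFDeriv_zero] at hbM
  refine ⟨𝓕 b, fun δ hδ ↦ ?_⟩
  obtain ⟨C, hC, hband⟩ := exists_setIntegral_norm_sq_fourier_le (hK.neg.add hb) hQ hε
    (mul_pos hδ (pow_pos hm 2))
  refine ⟨C * M ^ 2 / m ^ 2, by positivity, fun f hf E hE hE_meas hεE ↦ ?_⟩
  obtain ⟨c, hc, hc_supp⟩ := exists_fourier_eq_mul f b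
  have hc_sq (x : V) : ‖𝓕 c x‖ ^ 2 = ‖𝓕 b x‖ ^ 2 * ‖f x‖ ^ 2 := by
    rw [hc, norm_mul, mul_pow, mul_comm]
  have hlower : m ^ 2 * ∫ x in Q, ‖f x‖ ^ 2 ≤ ∫ x in Q, ‖𝓕 c x‖ ^ 2 := by
    rw [← integral_const_mul]
    refine setIntegral_mono_on ((integrable_norm_sq_schwartz f).integrableOn.const_mul _)
      (integrable_norm_sq_schwartz _).integrableOn hQ.measurableSet fun x hx ↦ ?_
    rw [hc_sq]
    have := hbm x hx
    gcongr
  have hupper : ∫ x in E, ‖𝓕 c x‖ ^ 2 ≤ M ^ 2 * ∫ x in E, ‖f x‖ ^ 2 := by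
    rw [← integral_const_mul]
    refine integral_mono (integrable_norm_sq_schwartz _).integrableOn
      ((integrable_norm_sq_schwartz f).integrableOn.const_mul _) fun x ↦ ?_
    beta_reduce
    rw [hc_sq]
    have := hbM x
    gcongr
  have htotal : ∫ ξ, ‖c ξ‖ ^ 2 = ∫ x, ‖𝓕 b x‖ ^ 2 * ‖f x‖ ^ 2 := by
    simp_rw [← hc_sq, SchwartzMap.integral_norm_sq_fourier]
  have hsupp : support c ⊆ -K + tsupport b :=
    hc_supp.trans (add_subset_add (neg_subset_neg.2 hf) (subset_tsupport b))
  have hscaled : m ^ 2 * ∫ x in Q, ‖f x‖ ^ 2 ≤ C * (M ^ 2 * ∫ x in E, ‖f x‖ ^ 2) +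
      δ * m ^ 2 * ∫ x, ‖𝓕 b x‖ ^ 2 * ‖f x‖ ^ 2 := by
    have := hband c c.continuous hsupp E hE hE_meas hεE
    rw [htotal, ← SchwartzMap.fourier_coe] at this
    exact (hlower.trans this).trans (by gcongr)
  refine le_of_mul_le_mul_left (hscaled.trans_eq ?_) (pow_pos hm 2)
  field_simp

end LocalEstimate

section Correlation

variable {G 𝕜 : Type*} [AddGroup G] [MeasurableSpace G] [MeasurableAdd₂ G] [RCLike 𝕜]
  {μ ν : Measure G} [SFinite μ] [μ.IsAddLeftInvariant] [SFinite ν] {w g : G → 𝕜}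

theorem integrable_prod_mul_comp_add (hw : Integrable w ν) (hg : Integrable g μ) :
    Integrable (fun p : G × G ↦ w p.1 * g (p.1 + p.2)) (ν.prod μ) :=
  ((MeasurePreserving.id ν).skew_product measurable_add
    (ae_of_all _ (map_add_left_eq_self μ))).integrable_comp_of_integrable (hw.mul_prod hg)

theorem integrable_integral_mul_comp_add (hw : Integrable w ν) (hg : Integrable g μ) :
    Integrable (fun k ↦ ∫ x, w x * g (x + k) ∂ν) μ :=
  (integrable_prod_mul_comp_add hw hg).integral_prod_right

theorem integral_integral_mul_comp_add (hw : Integrable w ν) (hg : Integrable g μ) :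
    ∫ k, ∫ x, w x * g (x + k) ∂ν ∂μ = (∫ x, w x ∂ν) * ∫ x, g x ∂μ := by
  rw [← integral_integral_swap (integrable_prod_mul_comp_add hw hg)]
  simp_rw [integral_const_mul, integral_add_left_eq_self g, integral_mul_const]

end Correlation

section Thick

/-- A set is thick if all its translates fill at least a fixed positive measure of one fixed
compact window. -/
def IsThick {V : Type*} [Add V] [TopologicalSpace V] [MeasureSpace V] (ω : Set V) : Prop :=
  ∃ Q : Set V, IsCompact Q ∧ ∃ ε > 0, ∀ k, ε ≤ volume.real (Q ∩ (· + k) ⁻¹' ω)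

variable {V : Type*} [NormedAddCommGroup V] [InnerProductSpace ℝ V] [FiniteDimensional ℝ V]
  [MeasurableSpace V] [BorelSpace V]

theorem support_fourier_compSubConstCLM (f : 𝓢(V, ℂ)) (k : V) :
    support (𝓕 (f.compSubConstCLM ℂ k) : 𝓢(V, ℂ)) = support (𝓕 f : 𝓢(V, ℂ)) := by
  have htranslate (ξ : V) : 𝓕 (f.compSubConstCLM ℂ k) ξ = 𝐞 (inner ℝ (-k) ξ) • 𝓕 f ξ := by
    have hcomp : ⇑(f.compSubConstCLM ℂ k) = f ∘ fun x ↦ x + -k := by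
      ext x
      simp [sub_eq_add_neg]
    rw [SchwartzMap.fourier_coe, hcomp]
    exact congrFun (VectorFourier.fourierIntegral_comp_add_right 𝐞 volume (innerₗ V) f (-k)) ξ
  ext ξ
  simp [htranslate, Circle.smul_def]

theorem measureReal_mul_integral_le_of_forall_translate {Q : Set V} (hQ : volume Q ≠ ⊤)
    {w g h : V → ℝ} (hw : Integrable w) (hg : Integrable g) (hh : Integrable h) {C δ : ℝ}
    (hle : ∀ k, ∫ x in Q, g (x + k) ≤ C * (∫ x in Q, h (x + k)) + δ * ∫ x, w x * g (x + k)) :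
    volume.real Q * ∫ x, g x ≤
      C * (volume.real Q * ∫ x, h x) + δ * ((∫ x, w x) * ∫ x, g x) := by
  have hQ_int : Integrable (fun _ ↦ (1 : ℝ)) (volume.restrict Q) := integrableOn_const hQ
  have hmean {u : V → ℝ} (hu : Integrable u) :
      Integrable (fun k ↦ ∫ x in Q, u (x + k)) ∧
        ∫ k, ∫ x in Q, u (x + k) = volume.real Q * ∫ x, u x := by
    have h_int := integrable_integral_mul_comp_add hQ_int hu
    have h_eq := integral_integral_mul_comp_add hQ_int hu
    simp only [one_mul, setIntegral_const, smul_eq_mul, mul_one] at h_int h_eq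
    exact ⟨h_int, h_eq⟩
  have hw_int := integrable_integral_mul_comp_add hw hg
  have := integral_mono (hmean hg).1 (((hmean hh).1.const_mul C).add (hw_int.const_mul δ)) hle
  rwa [integral_add' ((hmean hh).1.const_mul C) (hw_int.const_mul δ), integral_const_mul,
    integral_const_mul, (hmean hg).2, (hmean hh).2, integral_integral_mul_comp_add hw hg] at this

theorem IsThick.exists_integral_norm_sq_le {ω K : Set V} (hthick : IsThick ω)
    (hω : MeasurableSet ω) (hK : IsCompact K) :
    ∃ C > 0, ∀ f : 𝓢(V, ℂ), support (𝓕 f : 𝓢(V, ℂ)) ⊆ K →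
      ∫ x, ‖f x‖ ^ 2 ≤ C * ∫ x in ω, ‖f x‖ ^ 2 := by
  obtain ⟨Q, hQ, ε, hε, hωQ⟩ := hthick
  obtain ⟨η, hη⟩ := exists_setIntegral_norm_sq_le_of_support_fourier_subset hK hQ hε
  set q := volume.real Q
  have hq : 0 < q := (hε.trans_le (hωQ 0)).trans_le
    (measureReal_mono inter_subset_left hQ.measure_lt_top.ne)
  set n := ∫ x, ‖η x‖ ^ 2
  have hn : 0 ≤ n := by positivity
  obtain ⟨C, hC, hlocal⟩ := hη (q / (2 * (n + 1))) (by positivity)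
  refine ⟨2 * C, by positivity, fun f hf ↦ ?_⟩
  have htranslate (k : V) : ∫ x in Q, ‖f (x + k)‖ ^ 2 ≤
      C * (∫ x in Q, ω.indicator (fun y ↦ ‖f y‖ ^ 2) (x + k)) +
        q / (2 * (n + 1)) * ∫ x, ‖η x‖ ^ 2 * ‖f (x + k)‖ ^ 2 := by
    have hωk : MeasurableSet ((· + k) ⁻¹' ω) := hω.preimage (measurable_add_const k)
    have := hlocal (f.compSubConstCLM ℂ (-k))
      ((support_fourier_compSubConstCLM f (-k)).trans_subset hf) _ inter_subset_left
      (hQ.measurableSet.inter hωk) (hωQ k)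
    rw [← setIntegral_indicator hωk] at this
    simp only [SchwartzMap.compSubConstCLM_apply, sub_neg_eq_add] at this
    exact this
  have hmean := measureReal_mul_integral_le_of_forall_translate hQ.measure_lt_top.ne
    (integrable_norm_sq_schwartz η) (integrable_norm_sq_schwartz f)
    ((integrable_norm_sq_schwartz f).indicator hω) htranslate
  rw [integral_indicator hω] at hmean
  have habsorb : q / (2 * (n + 1)) * (n * ∫ x, ‖f x‖ ^ 2) ≤ q / 2 * ∫ x, ‖f x‖ ^ 2 := by
    rw [← mul_assoc]
    gcongr
    rw [div_mul_eq_mul_div, div_le_div_iff₀ (by positivity) two_pos]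
    nlinarith [hn, hq]
  refine le_of_mul_le_mul_left ?_ hq
  linarith

end Thick

section Multiplier

theorem integral_norm_sq_le_two_mul_add {α F : Type*} {_ : MeasurableSpace α} {μ : Measure α}
    [NormedAddCommGroup F] {f g : α → F} (hf : MemLp f 2 μ) (hg : MemLp g 2 μ) :
    ∫ x, ‖f x‖ ^ 2 ∂μ ≤ 2 * ((∫ x, ‖g x‖ ^ 2 ∂μ) + ∫ x, ‖f x - g x‖ ^ 2 ∂μ) := by
  have hg_int := hg.integrable_norm_pow two_ne_zero
  have hfg_int : Integrable (fun x ↦ ‖f x - g x‖ ^ 2) μ :=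
    (hf.sub hg).integrable_norm_pow two_ne_zero
  rw [← integral_add hg_int hfg_int, ← integral_const_mul]
  refine integral_mono (hf.integrable_norm_pow two_ne_zero) ((hg_int.add hfg_int).const_mul 2)
    fun x ↦ ?_
  calc ‖f x‖ ^ 2 ≤ (‖g x‖ + ‖f x - g x‖) ^ 2 := by gcongr; exact norm_le_norm_add_norm_sub' _ _
    _ ≤ 2 * (‖g x‖ ^ 2 + ‖f x - g x‖ ^ 2) := add_sq_le

variable {V : Type*} [NormedAddCommGroup V] [InnerProductSpace ℝ V] [FiniteDimensional ℝ V]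
  [MeasurableSpace V] [BorelSpace V]

theorem memLp_mul_of_norm_le {m : V → ℂ} (hm : AEStronglyMeasurable m) {A r : ℝ}
    (hle : ∀ ξ, ‖m ξ‖ ≤ A * (1 + ‖ξ‖ ^ 2) ^ r) (g : 𝓢(V, ℂ)) (p : ENNReal) :
    MemLp (fun ξ ↦ m ξ * g ξ) p := by
  let weighted := SchwartzMap.smulLeftCLM ℂ (fun ξ : V ↦ (1 + ‖ξ‖ ^ 2) ^ r) g
  refine ((weighted.memLp p).const_smul A).mono (hm.mul g.continuous.aestronglyMeasurable)
    (ae_of_all _ fun ξ ↦ ?_)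
  have hpos : 0 < (1 + ‖ξ‖ ^ 2) ^ r := by positivity
  have hA : 0 ≤ A := nonneg_of_mul_nonneg_left ((norm_nonneg _).trans (hle ξ)) hpos
  rw [Pi.mul_apply, Pi.smul_apply, SchwartzMap.smulLeftCLM_apply_apply (by fun_prop), norm_mul,
    norm_smul, norm_smul, Real.norm_of_nonneg hA, Real.norm_of_nonneg hpos.le,
    ← mul_assoc]
  gcongr
  exact hle ξ

theorem memLp_const_add_mul_of_norm_le {m : V → ℂ} (hm : AEStronglyMeasurable m) {A r : ℝ}
    (hle : ∀ ξ, ‖m ξ‖ ≤ A * (1 + ‖ξ‖ ^ 2) ^ r) (a : ℂ) (g : 𝓢(V, ℂ)) (p : ENNReal) :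
    MemLp (fun ξ ↦ (a + m ξ) * g ξ) p := by
  simpa only [add_mul] using! ((g.memLp p).const_mul a).add (memLp_mul_of_norm_le hm hle g p)

theorem sq_mul_integral_norm_sq_le_of_le_norm {m : V → ℂ} {φ : 𝓢(V, ℂ)}
    (hm : Integrable fun ξ ↦ ‖m ξ * 𝓕 φ ξ‖ ^ 2) {a : ℝ} (ha : 0 ≤ a) (hle : ∀ ξ, a ≤ ‖m ξ‖) :
    a ^ 2 * ∫ x, ‖φ x‖ ^ 2 ≤ ∫ ξ, ‖m ξ * 𝓕 φ ξ‖ ^ 2 := by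
  rw [← SchwartzMap.integral_norm_sq_fourier, ← integral_const_mul]
  refine integral_mono ((integrable_norm_sq_schwartz _).const_mul _) hm fun ξ ↦ ?_
  beta_reduce
  rw [norm_mul, mul_pow]
  have := hle ξ
  gcongr

theorem exists_lowpass {S : Set V} (hS : Bornology.IsBounded S) :
    ∃ K, IsCompact K ∧ ∀ φ : 𝓢(V, ℂ), ∃ f : 𝓢(V, ℂ), support (𝓕 f : 𝓢(V, ℂ)) ⊆ K ∧
      ∀ ξ, ‖𝓕 (φ - f) ξ‖ ≤ Sᶜ.indicator (fun ξ ↦ ‖𝓕 φ ξ‖) ξ := by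
  obtain ⟨R, hR, hSR⟩ := hS.exists_pos_norm_le
  let cutoff : ContDiffBump (0 : V) := ⟨R, 2 * R, hR, by linarith⟩
  refine ⟨tsupport (bumpSchwartz cutoff), hasCompactSupport_bumpSchwartz cutoff, fun φ ↦ ?_⟩
  obtain ⟨f, hf, -⟩ := exists_fourier_eq_mul (bumpSchwartz cutoff) φ
  refine ⟨f, fun ξ hξ ↦ subset_tsupport _ fun h ↦ hξ (by rw [hf, h, zero_mul]), fun ξ ↦ ?_⟩
  have hremainder : 𝓕 (φ - f) ξ = ((1 - cutoff ξ : ℝ) : ℂ) * 𝓕 φ ξ := by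
    have hsub : 𝓕 (φ - f) = 𝓕 φ - 𝓕 f := map_sub (FourierTransform.fourierₗ ℂ _) φ f
    rw [hsub, sub_apply, hf, bumpSchwartz_apply]
    push_cast
    ring
  rw [hremainder, norm_mul, Complex.norm_real, Real.norm_of_nonneg (sub_nonneg.2 cutoff.le_one)]
  by_cases hξ : ξ ∈ S
  · simp [cutoff.one_of_mem_closedBall (mem_closedBall_zero_iff.2 (hSR ξ hξ)), hξ]
  · rw [indicator_of_mem hξ]
    exact mul_le_of_le_one_left (norm_nonneg _) (sub_le_self 1 cutoff.nonneg)

theorem IsThick.exists_integral_norm_sq_le_of_one_le_norm {ω S : Set V} (hthick : IsThick ω)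
    (hω : MeasurableSet ω) (hS : Bornology.IsBounded S) :
    ∃ C > 0, ∀ (m : V → ℂ) (φ : 𝓢(V, ℂ)), Integrable (fun ξ ↦ ‖m ξ * 𝓕 φ ξ‖ ^ 2) →
      (∀ ξ ∉ S, 1 ≤ ‖m ξ‖) →
        ∫ x, ‖φ x‖ ^ 2 ≤ C * ((∫ ξ, ‖m ξ * 𝓕 φ ξ‖ ^ 2) + ∫ x in ω, ‖φ x‖ ^ 2) := by
  obtain ⟨K, hK, hlow⟩ := exists_lowpass hS
  obtain ⟨C, hC, hLS⟩ := hthick.exists_integral_norm_sq_le hω hK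
  refine ⟨4 * C + 2, by positivity, fun m φ hm_int hm ↦ ?_⟩
  obtain ⟨f, hf_supp, hf⟩ := hlow φ
  have hhigh : ∫ x, ‖φ x - f x‖ ^ 2 ≤ ∫ ξ, ‖m ξ * 𝓕 φ ξ‖ ^ 2 := by
    simp_rw [← sub_apply, ← SchwartzMap.integral_norm_sq_fourier (φ - f)]
    refine integral_mono (integrable_norm_sq_schwartz (𝓕 (φ - f))) hm_int fun ξ ↦ ?_
    have : ‖𝓕 (φ - f) ξ‖ ≤ ‖m ξ * 𝓕 φ ξ‖ := by
      refine (hf ξ).trans (indicator_apply_le' (fun hξ ↦ ?_) fun _ ↦ norm_nonneg _)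
      rw [norm_mul]
      exact le_mul_of_one_le_left (norm_nonneg _) (hm ξ hξ)
    beta_reduce
    gcongr
  have hφ := integral_norm_sq_le_two_mul_add (φ.memLp 2) (f.memLp 2)
  have hfω := integral_norm_sq_le_two_mul_add ((f.memLp 2).restrict ω) ((φ.memLp 2).restrict ω)
  have hhighω : ∫ x in ω, ‖f x - φ x‖ ^ 2 ≤ ∫ ξ, ‖m ξ * 𝓕 φ ξ‖ ^ 2 := by
    simp_rw [norm_sub_rev (f _)]
    exact (setIntegral_le_integral (integrable_norm_sq_schwartz (φ - f))
      (ae_of_all _ fun _ ↦ by positivity)).trans hhigh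
  have hlow := hLS f hf_supp
  have hω_nonneg : 0 ≤ ∫ x in ω, ‖φ x‖ ^ 2 := by positivity
  nlinarith

theorem IsThick.exists_sq_mul_integral_norm_sq_le {ω : Set V} (hthick : IsThick ω)
    (hω : MeasurableSet ω) {σ : V → ℝ} (hσ : AEStronglyMeasurable σ) (hσ_nonneg : ∀ ξ, 0 ≤ σ ξ)
    {A r : ℝ} (hgrowth : ∀ ξ, σ ξ ≤ A * (1 + ‖ξ‖ ^ 2) ^ r)
    (hlim : Tendsto σ (Bornology.cobounded V) atTop) {β : ℝ} (hβ : 0 < β) :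
    ∃ C > 0, ∀ lam : ℂ, -β < lam.re → ∀ φ : 𝓢(V, ℂ),
      (lam.re + β) ^ 2 * ∫ x, ‖φ x‖ ^ 2 ≤
        C * ((∫ ξ, ‖(lam + σ ξ) * 𝓕 φ ξ‖ ^ 2) + ∫ x in ω, ‖φ x‖ ^ 2) := by
  have hS : Bornology.IsBounded {ξ | σ ξ < β + 1} := by
    rw [Bornology.isBounded_def]
    filter_upwards [hlim.eventually_ge_atTop (β + 1)] with ξ hξ using not_lt.2 hξ
  obtain ⟨C, hC, huncertainty⟩ := hthick.exists_integral_norm_sq_le_of_one_le_norm hω hS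
  refine ⟨(1 + β) ^ 2 * (C + 1), by positivity, fun lam hlam φ ↦ ?_⟩
  have hre (ξ : V) : lam.re + σ ξ ≤ ‖lam + σ ξ‖ := by simpa using (lam + σ ξ).re_le_norm
  have hint : Integrable fun ξ ↦ ‖(lam + σ ξ) * 𝓕 φ ξ‖ ^ 2 :=
    (memLp_const_add_mul_of_norm_le (Complex.continuous_ofReal.comp_aestronglyMeasurable hσ)
      (fun ξ ↦ by simpa [abs_of_nonneg (hσ_nonneg ξ)] using hgrowth ξ) lam (𝓕 φ)
      2).integrable_norm_pow two_ne_zero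
  set I := ∫ ξ, ‖(lam + σ ξ) * 𝓕 φ ξ‖ ^ 2
  set J := ∫ x in ω, ‖φ x‖ ^ 2
  have hI : 0 ≤ I := by positivity
  have hJ : 0 ≤ J := by positivity
  rw [mul_assoc]
  rcases le_or_gt 1 lam.re with hlam_ge | hlam_lt
  · calc (lam.re + β) ^ 2 * ∫ x, ‖φ x‖ ^ 2
        ≤ ((1 + β) * lam.re) ^ 2 * ∫ x, ‖φ x‖ ^ 2 := by
          gcongr
          nlinarith
      _ = (1 + β) ^ 2 * (lam.re ^ 2 * ∫ x, ‖φ x‖ ^ 2) := by ring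
      _ ≤ (1 + β) ^ 2 * I := by
          gcongr
          exact sq_mul_integral_norm_sq_le_of_le_norm hint (by linarith) fun ξ ↦ by
            linarith [hre ξ, hσ_nonneg ξ]
      _ ≤ (1 + β) ^ 2 * ((C + 1) * (I + J)) := by
          gcongr
          nlinarith
  · calc (lam.re + β) ^ 2 * ∫ x, ‖φ x‖ ^ 2 ≤ (1 + β) ^ 2 * ∫ x, ‖φ x‖ ^ 2 := by
          gcongr
          linarith
      _ ≤ (1 + β) ^ 2 * (C * (I + J)) := by
          gcongr
          refine huncertainty _ φ hint fun ξ hξ ↦ ?_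
          have hσξ : β + 1 ≤ σ ξ := not_lt.1 hξ
          linarith [hre ξ]
      _ ≤ (1 + β) ^ 2 * ((C + 1) * (I + J)) := by
          gcongr
          linarith

end Multiplier

section Coordinates

theorem tendsto_two_pi_mul_norm_rpow_cobounded {V : Type*} [SeminormedAddCommGroup V] {s : ℝ}
    (hs : 0 < s) :
    Tendsto (fun ξ : V ↦ (2 * π * ‖ξ‖) ^ s) (Bornology.cobounded V) atTop :=
  (tendsto_rpow_atTop hs).comp (tendsto_norm_cobounded_atTop.const_mul_atTop two_pi_pos)

theorem two_pi_mul_norm_rpow_le {V : Type*} [SeminormedAddCommGroup V] {s : ℝ} (hs : 0 ≤ s)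
    (ξ : V) : (2 * π * ‖ξ‖) ^ s ≤ (2 * π) ^ s * (1 + ‖ξ‖ ^ 2) ^ (s / 2) := by
  have hsq : ‖ξ‖ ≤ (1 + ‖ξ‖ ^ 2) ^ (1 / 2 : ℝ) := by
    rw [← Real.sqrt_eq_rpow]
    exact Real.le_sqrt_of_sq_le (by linarith)
  rw [Real.mul_rpow two_pi_pos.le (norm_nonneg ξ), show s / 2 = 1 / 2 * s by ring,
    Real.rpow_mul (by positivity)]
  gcongr

theorem isThick_preimage_ofLp {ι : Type*} [Fintype ι] {ω : Set (ι → ℝ)} (hω : MeasurableSet ω)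
    {ε : ℝ} (hε : 0 < ε) {r : ℝ} (hr : 0 ≤ r)
    (hcubes : ∀ x : ι → ℝ, ENNReal.ofReal ε ≤ volume (ω ∩ {y | ∀ i, |y i - x i| ≤ r})) :
    IsThick (WithLp.ofLp ⁻¹' ω : Set (EuclideanSpace ℝ ι)) := by
  have hQ : IsCompact (WithLp.ofLp ⁻¹' closedBall (0 : ι → ℝ) r : Set (EuclideanSpace ℝ ι)) :=
    (PiLp.homeomorph 2 fun _ : ι ↦ ℝ).isCompact_preimage.2 (isCompact_closedBall _ _)
  refine ⟨_, hQ, ε, hε, fun k ↦ ?_⟩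
  have hcube : {y | ∀ i, |y i - k i| ≤ r} = closedBall k.ofLp r := by
    ext y
    simp [closedBall_pi _ hr, Real.dist_eq]
  have htranslate : WithLp.ofLp ⁻¹' closedBall 0 r ∩ (· + k) ⁻¹' (WithLp.ofLp ⁻¹' ω) =
      (· + k) ⁻¹' (WithLp.ofLp ⁻¹' (ω ∩ closedBall k.ofLp r)) := by
    ext x
    simp [and_comm, dist_eq_norm]
  have hmeas : NullMeasurableSet (ω ∩ closedBall k.ofLp r) volume :=
    (hω.inter measurableSet_closedBall).nullMeasurableSet
  rw [measureReal_def, ← ENNReal.ofReal_le_iff_le_toReal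
    (measure_ne_top_of_subset inter_subset_left hQ.measure_lt_top.ne), htranslate,
    measure_preimage_add_right, (PiLp.volume_preserving_ofLp ι).measure_preimage hmeas, ← hcube]
  exact hcubes k.ofLp

theorem fourier_comp_ofLp {ι : Type*} [Fintype ι] (f : (ι → ℝ) → ℂ) (ξ : EuclideanSpace ℝ ι) :
    𝓕 (fun x : EuclideanSpace ℝ ι ↦ f x.ofLp) ξ =
      ∫ x, f x * Complex.exp (-(2 * π * Complex.I * ((∑ i, x i * ξ i : ℝ) : ℂ))) := by
  rw [Real.fourier_eq', ← (PiLp.volume_preserving_ofLp ι).integral_comp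
    (MeasurableEquiv.toLp 2 (ι → ℝ)).symm.measurableEmbedding]
  refine integral_congr_ae (ae_of_all _ fun x ↦ ?_)
  have hinner : inner ℝ x ξ = ∑ i, x i * ξ i := by simp [PiLp.inner_apply, mul_comm]
  beta_reduce
  rw [smul_eq_mul, mul_comm, hinner]
  congr 2
  push_cast
  ring

theorem fractional_heat_HESI_general
    {N : ℕ} (s : ℝ) (hs : 0 < s)
    (ω : Set (Fin N → ℝ)) (hω : MeasurableSet ω)
    (hthick : ∃ ε : ℝ, 0 < ε ∧ ∃ L : ℝ, 0 < L ∧ ∀ x : Fin N → ℝ,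
      ENNReal.ofReal (ε * L ^ N) ≤ volume (ω ∩ {y | ∀ i, |y i - x i| ≤ L / 2})) :
    ∀ β : ℝ, 0 < β → ∃ C : ℝ, 0 < C ∧
      ∀ lam : ℂ, -β < lam.re → ∀ φ : SchwartzMap (Fin N → ℝ) ℂ,
        (lam.re + β) ^ 2 * ∫ x : Fin N → ℝ, ‖φ x‖ ^ 2
          ≤ C * ((∫ ξ : Fin N → ℝ,
              ‖(lam + ((2 * π * Real.sqrt (∑ i, ξ i ^ 2)) ^ s : ℝ)) *
                ∫ x : Fin N → ℝ, φ x *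
                  Complex.exp (-(2 * π * Complex.I * ((∑ i, x i * ξ i : ℝ) : ℂ)))‖ ^ 2)
            + ∫ x in ω, ‖φ x‖ ^ 2) := by
  intro β hβ
  obtain ⟨ε, hε, L, hL, hcubes⟩ := hthick
  have hE : IsThick (WithLp.ofLp ⁻¹' ω : Set (EuclideanSpace ℝ (Fin N))) :=
    isThick_preimage_ofLp hω (by positivity) (by positivity) hcubes
  have hmp := PiLp.volume_preserving_ofLp (Fin N)
  have hemb := (MeasurableEquiv.toLp 2 (Fin N → ℝ)).symm.measurableEmbedding
  have hσ : Continuous fun ξ : EuclideanSpace ℝ (Fin N) ↦ (2 * π * ‖ξ‖) ^ s :=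
    Continuous.rpow_const (by fun_prop) fun _ ↦ Or.inr hs.le
  obtain ⟨C, hC, hesi⟩ := hE.exists_sq_mul_integral_norm_sq_le (hmp.measurable hω)
    hσ.aestronglyMeasurable (fun _ ↦ by positivity) (two_pi_mul_norm_rpow_le hs.le)
    (tendsto_two_pi_mul_norm_rpow_cobounded hs) hβ
  refine ⟨C, hC, fun lam hlam φ ↦ ?_⟩
  let φE := SchwartzMap.compCLMOfContinuousLinearEquiv ℝ
    (PiLp.continuousLinearEquiv 2 ℝ fun _ : Fin N ↦ ℝ) φ
  have hφE (ξ) : 𝓕 φE ξ =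
      ∫ x, φ x * Complex.exp (-(2 * π * Complex.I * ((∑ i, x i * ξ i : ℝ) : ℂ))) :=
    fourier_comp_ofLp φ ξ
  rw [← hmp.integral_comp hemb, ← hmp.integral_comp hemb, ← hmp.setIntegral_preimage_emb hemb]
  have hbound := hesi lam hlam φE
  simp only [hφE, EuclideanSpace.norm_eq, Real.norm_eq_abs, sq_abs] at hbound
  exact hbound

end Coordinates

end

/-- The sharp Hautus-type inequality (HESI) for the fractional heat equation controlled on
a thick set `ω ⊆ ℝ^N`: for every `β > 0` there is `C > 0` such that for all `λ` with
`Re λ > -β` and all Schwartz functions `φ`,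
`(Re λ + β)² ∫|φ|² ≤ C (∫ |(λ + (2π|ξ|)^s) φ̂(ξ)|² dξ + ∫_ω |φ|²)`. -/
theorem fractional_heat_HESI
    {N : ℕ} (hN : 0 < N) (s : ℝ) (hs : s ∈ Set.Ioo (0 : ℝ) 1)
    (ω : Set (Fin N → ℝ)) (hω : MeasurableSet ω)
    (hthick : ∃ ε : ℝ, 0 < ε ∧ ∃ L : ℝ, 0 < L ∧ ∀ x : Fin N → ℝ,
      ENNReal.ofReal (ε * L ^ N) ≤ volume (ω ∩ {y | ∀ i, |y i - x i| ≤ L / 2})) :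
    ∀ β : ℝ, 0 < β → ∃ C : ℝ, 0 < C ∧
      ∀ lam : ℂ, -β < lam.re → ∀ φ : SchwartzMap (Fin N → ℝ) ℂ,
        (lam.re + β) ^ 2 * ∫ x : Fin N → ℝ, ‖φ x‖ ^ 2
          ≤ C * ((∫ ξ : Fin N → ℝ,
              ‖(lam + ((2 * π * Real.sqrt (∑ i, ξ i ^ 2)) ^ s : ℝ)) *
                ∫ x : Fin N → ℝ, φ x *
                  Complex.exp (-(2 * π * Complex.I * ((∑ i, x i * ξ i : ℝ) : ℂ)))‖ ^ 2)
            + ∫ x in ω, ‖φ x‖ ^ 2) := by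
  exact fractional_heat_HESI_general s hs.1 ω hω hthick
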